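/- A finite set S of points in ℝ² has finite order under T if and only if S is one of the following: (1) the empty set; (2) a set of collinear points; (3) a set of collinear points together with one additional point not on their common line; (4) the four vertices of a nondegenerate parallelogram; (5) the four vertices of a nondegenerate parallelogram together with the intersection point of its two diagonals. -/

import Mathlib

open Set Filter

noncomputable section

/-- The line through two points in the plane `ℝ × ℝ`. -/
def line (a b : ℝ × ℝ) : AffineSubspace ℝ (ℝ × ℝ) := affineSpan ℝ {a, b}

/-- The intersection operation `T`: the set of all intersection points of pairs of
distinct lines through pairs of distinct points of `S`. -/
def interT (S : Set (ℝ × ℝ)) : Set (ℝ × ℝ) :=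
  {x | ∃ a ∈ S, ∃ b ∈ S, ∃ c ∈ S, ∃ d ∈ S,
    a ≠ b ∧ c ≠ d ∧ line a b ≠ line c d ∧ x ∈ line a b ∧ x ∈ line c d}

/-- `A, B, C, D` are the vertices of a nondegenerate parallelogram:
`B - A = C - D ≠ 0` and `A, B, D` are not collinear. -/
def IsParallelogram (A B C D : ℝ × ℝ) : Prop :=
  B - A = C - D ∧ B - A ≠ 0 ∧ ¬ Collinear ℝ ({A, B, D} : Set (ℝ × ℝ))

/-! If the iterates of `T` stabilize and `S` is not collinear, then `S` lies in a finite set `R`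
with `T R ⊆ R`. Take a triangle `A B C` of maximal area with vertices in `R`. A point of `R`
outside the triangle must be an opposite parallelogram vertex such as `B + C - A`, since otherwise
a line through it meets a side line outside the side, which gives a larger triangle. If such a
vertex occurs, then `R` is contained in the parallelogram together with its centre. Otherwise `R`
lies in the triangle, and two sides cannot both carry further points of `R`: together with the
vertices, such points generate a line meeting the third side line outside the side. Interior points
of the triangle are excluded by projecting them from the vertices to the sides. Hence removing one
vertex leaves a collinear set. -/

lemma mem_and_notMem_affineSpan_of_not_collinear {k V P : Type*} [DivisionRing k]
    [AddCommGroup V] [Module k V] [AddTorsor V P] {S : Set P} {p : P} (h : ¬ Collinear k S)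
    (hp : Collinear k (S \ {p})) : p ∈ S ∧ p ∉ affineSpan k (S \ {p}) := by
  constructor
  · by_contra hpS
    exact h (by rwa [sdiff_singleton_eq_self hpS] at hp)
  · intro hspan
    have := (collinear_insert_iff_of_mem_affineSpan hspan).2 hp
    exact h (this.subset (by rw [insert_sdiff_singleton]; exact subset_insert p S))

section Orientation

variable {K : Type*}

section CommRing

variable [CommRing K]

/-- The determinant of two plane vectors; it vanishes exactly when they are parallel. -/
def cross (u v : K × K) : K := u.1 * v.2 - u.2 * v.1

/-- Twice the signed area of the triangle `a b c`, used as the equation of the line through `a`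
and `b` in the unknown `c`. -/
def orient (a b c : K × K) : K := cross (b - a) (c - a)

@[simp] lemma orient_self_left (a b : K × K) : orient a a b = 0 := by
  simp [orient, cross]

@[simp] lemma orient_self_right (a b : K × K) : orient a b b = 0 := by
  simp only [orient, cross]; ring

@[simp] lemma orient_self_outer (a b : K × K) : orient a b a = 0 := by
  simp [orient, cross]

lemma orient_rotate (a b c : K × K) : orient b c a = orient a b c := by
  simp only [orient, cross, Prod.fst_sub, Prod.snd_sub]; ring

lemma orient_swap (a b c : K × K) : orient b a c = -orient a b c := by
  simp only [orient, cross, Prod.fst_sub, Prod.snd_sub]; ring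

lemma orient_swap_right (a b c : K × K) : orient a c b = -orient a b c := by
  rw [← orient_rotate, orient_swap, orient_rotate]

lemma orient_add_orient_add_orient (a b c p : K × K) :
    orient a b p + orient b c p + orient c a p = orient a b c := by
  simp only [orient, cross, Prod.fst_sub, Prod.snd_sub]; ring

lemma cross_sub_sub (a b c d : K × K) :
    cross (b - a) (d - c) = orient a b d - orient a b c := by
  simp only [orient, cross, Prod.fst_sub, Prod.snd_sub]; ring

lemma orient_mul_orient (a b c p q : K × K) :
    orient a b c * orient a p q = orient a b p * orient a c q - orient a b q * orient a c p := by
  simp only [orient, cross, Prod.fst_sub, Prod.snd_sub]; ring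

lemma orient_opposite_vertex (a b c : K × K) : orient c b (b + c - a) = orient a b c := by
  simp only [orient, cross, Prod.fst_sub, Prod.snd_sub, Prod.fst_add, Prod.snd_add]; ring

lemma orient_add_sub (a b c : K × K) : orient a b (b + c - a) = orient a b c := by
  simp only [orient, cross, Prod.fst_sub, Prod.snd_sub, Prod.fst_add, Prod.snd_add]; ring

lemma cross_diagonals (a b c : K × K) :
    cross (b + c - a - a) (c - b) = 2 * orient a b c := by
  simp only [orient, cross, Prod.fst_sub, Prod.snd_sub, Prod.fst_add, Prod.snd_add]; ring

end CommRing

section Field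

variable [Field K]

lemma exists_eq_smul_of_cross_eq_zero {u w : K × K} (hu : u ≠ 0) (h : cross u w = 0) :
    ∃ t : K, w = t • u := by
  simp only [cross] at h
  by_cases hu₁ : u.1 = 0
  · have hu₂ : u.2 ≠ 0 := fun hu₂ => hu (Prod.ext hu₁ hu₂)
    refine ⟨w.2 / u.2, Prod.ext ?_ ?_⟩
    · have : w.1 = 0 := by simpa [hu₁, hu₂] using h
      simp [hu₁, this]
    · simp [hu₂]
  · refine ⟨w.1 / u.1, Prod.ext ?_ ?_⟩
    · simp [hu₁]
    · simp only [Prod.smul_snd, smul_eq_mul]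
      field_simp
      linear_combination h

lemma exists_eq_add_smul_of_orient_eq_zero {a b x : K × K} (hab : a ≠ b)
    (h : orient a b x = 0) : ∃ t : K, x = a + t • (b - a) := by
  obtain ⟨t, ht⟩ := exists_eq_smul_of_cross_eq_zero (sub_ne_zero.2 hab.symm) h
  exact ⟨t, by rw [← ht, add_sub_cancel]⟩

lemma eq_of_cross_sub_eq_zero {u v x y : K × K} (h : cross u v ≠ 0) (hu : cross u (x - y) = 0)
    (hv : cross v (x - y) = 0) : x = y := by
  simp only [cross, Prod.fst_sub, Prod.snd_sub] at *
  refine Prod.ext (mul_left_cancel₀ h ?_) (mul_left_cancel₀ h ?_)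
  · linear_combination v.1 * hu - u.1 * hv
  · linear_combination v.2 * hu - u.2 * hv

lemma eq_of_orient_eq_zero {a b c d x y : K × K} (h : cross (b - a) (d - c) ≠ 0)
    (hx₁ : orient a b x = 0) (hx₂ : orient c d x = 0)
    (hy₁ : orient a b y = 0) (hy₂ : orient c d y = 0) : x = y :=
  eq_of_cross_sub_eq_zero h (by rw [cross_sub_sub, hx₁, hy₁, sub_zero])
    (by rw [cross_sub_sub, hx₂, hy₂, sub_zero])

lemma eq_vertex_of_orient_eq_zero {a b c x : K × K} (h : orient a b c ≠ 0)
    (h₁ : orient a b x = 0) (h₂ : orient a c x = 0) : x = a :=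
  eq_of_orient_eq_zero h h₁ h₂ (orient_self_outer a b) (orient_self_outer a c)

lemma exists_orient_eq_zero {a b c d : K × K} (h : cross (b - a) (d - c) ≠ 0) :
    ∃ x, orient a b x = 0 ∧ orient c d x = 0 := by
  refine ⟨a + (cross (c - a) (d - c) / cross (b - a) (d - c)) • (b - a), ?_, ?_⟩
  · simp only [orient, cross, add_sub_cancel_left, Prod.smul_fst, Prod.smul_snd, smul_eq_mul]
    ring
  · set t := cross (c - a) (d - c) / cross (b - a) (d - c)
    have ht' : t * cross (b - a) (d - c) = cross (c - a) (d - c) := div_mul_cancel₀ _ h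
    simp only [orient, cross, Prod.fst_sub, Prod.snd_sub, Prod.fst_add, Prod.snd_add,
      Prod.smul_fst, Prod.smul_snd, smul_eq_mul] at ht' ⊢
    linear_combination -ht'

lemma collinear_of_forall_orient_eq_zero {S : Set (K × K)} {a b : K × K} (hab : a ≠ b)
    (h : ∀ x ∈ S, orient a b x = 0) : Collinear K S := by
  rw [collinear_iff_exists_forall_eq_smul_vadd]
  refine ⟨a, b - a, fun x hx => ?_⟩
  obtain ⟨t, rfl⟩ := exists_eq_add_smul_of_orient_eq_zero hab (h x hx)
  exact ⟨t, by rw [vadd_eq_add, add_comm]⟩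

lemma collinear_iff_forall_orient_eq_zero {S : Set (K × K)} :
    Collinear K S ↔ ∀ a ∈ S, ∀ b ∈ S, ∀ c ∈ S, orient a b c = 0 := by
  constructor
  · intro h a ha b hb c hc
    obtain ⟨v, hv⟩ := (collinear_iff_of_mem ha).1 h
    obtain ⟨r, rfl⟩ := hv b hb
    obtain ⟨s, rfl⟩ := hv c hc
    simp only [orient, cross, vadd_eq_add, add_sub_cancel_right, Prod.smul_fst, Prod.smul_snd,
      smul_eq_mul]
    ring
  · intro h
    rcases S.subsingleton_or_nontrivial with hS | ⟨a, ha, b, hb, hab⟩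
    · rcases hS.eq_empty_or_singleton with rfl | ⟨p, rfl⟩
      · exact collinear_empty K _
      · exact collinear_singleton K p
    · exact collinear_of_forall_orient_eq_zero hab (h a ha b hb)

lemma not_collinear_iff_exists_orient_ne_zero {S : Set (K × K)} :
    ¬ Collinear K S ↔ ∃ a ∈ S, ∃ b ∈ S, ∃ c ∈ S, orient a b c ≠ 0 := by
  simp [collinear_iff_forall_orient_eq_zero]

lemma collinear_triple_iff_orient_eq_zero {a b c : K × K} :
    Collinear K {a, b, c} ↔ orient a b c = 0 := by
  refine ⟨fun h => collinear_iff_forall_orient_eq_zero.1 h a (by simp) b (by simp) c (by simp),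
    fun h => ?_⟩
  rcases eq_or_ne a b with rfl | hab
  · simpa using collinear_pair K a c
  · refine collinear_of_forall_orient_eq_zero hab ?_
    rintro x (rfl | rfl | rfl)
    exacts [orient_self_outer _ _, orient_self_right _ _, h]

lemma orient_midpoint_right [CharZero K] (a b : K × K) : orient a b (midpoint K a b) = 0 := by
  simp only [midpoint_eq_smul_add, invOf_eq_inv, orient, cross, Prod.fst_sub, Prod.snd_sub,
    Prod.fst_add, Prod.snd_add, Prod.smul_fst, Prod.smul_snd, smul_eq_mul]
  field

lemma orient_opposite_vertex_midpoint [CharZero K] (a b c : K × K) :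
    orient a (b + c - a) (midpoint K b c) = 0 := by
  simp only [midpoint_eq_smul_add, invOf_eq_inv, orient, cross, Prod.fst_sub, Prod.snd_sub,
    Prod.fst_add, Prod.snd_add, Prod.smul_fst, Prod.smul_snd, smul_eq_mul]
  field

end Field

end Orientation

section IntersectionClosed

variable {K : Type*} [Field K]

/-- A plane set containing the common point of any two nonparallel lines through its points.
For `K = ℝ` this says `interT R ⊆ R`; with determinants it makes sense over every field. -/
def IntersectionClosed (R : Set (K × K)) : Prop :=
  ∀ a ∈ R, ∀ b ∈ R, ∀ c ∈ R, ∀ d ∈ R, ∀ x : K × K, cross (b - a) (d - c) ≠ 0 →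
    orient a b x = 0 → orient c d x = 0 → x ∈ R

lemma IntersectionClosed.exists_mem {R : Set (K × K)} (hR : IntersectionClosed R)
    {a b c d : K × K} (ha : a ∈ R) (hb : b ∈ R) (hc : c ∈ R) (hd : d ∈ R)
    (h : cross (b - a) (d - c) ≠ 0) : ∃ x ∈ R, orient a b x = 0 ∧ orient c d x = 0 := by
  obtain ⟨x, hx₁, hx₂⟩ := exists_orient_eq_zero h
  exact ⟨x, hR a ha b hb c hc d hd x h hx₁ hx₂, hx₁, hx₂⟩

lemma IntersectionClosed.exists_mem_side {R : Set (K × K)} (hR : IntersectionClosed R)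
    {A B C P : K × K} (hA : A ∈ R) (hB : B ∈ R) (hC : C ∈ R) (hP : P ∈ R)
    (hBCP : orient B C P ≠ 0) (hCAP : orient C A P ≠ 0)
    (hsum : orient B C P + orient C A P ≠ 0) :
    ∃ F ∈ R, orient A B F = 0 ∧ F ≠ A ∧ F ≠ B := by
  obtain ⟨F, hF, hCPF, hABF⟩ := hR.exists_mem hC hP hA hB (by
    rwa [cross_sub_sub, orient_rotate B C P, orient_swap_right C A P, sub_neg_eq_add])
  refine ⟨F, hF, hABF, ?_, ?_⟩ <;> rintro rfl
  · rw [orient_swap_right] at hCPF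
    exact hCAP (neg_eq_zero.1 hCPF)
  · rw [orient_rotate] at hCPF
    exact hBCP hCPF

/-- The affine map sending `(0, 0)`, `(1, 0)`, `(0, 1)` to `A`, `B`, `C`. -/
def frameMap (A B C p : K × K) : K × K := A + p.1 • (B - A) + p.2 • (C - A)

lemma cross_frameMap (A B C a b c d : K × K) :
    cross (frameMap A B C b - frameMap A B C a) (frameMap A B C d - frameMap A B C c) =
      orient A B C * cross (b - a) (d - c) := by
  simp only [orient, cross, frameMap, Prod.fst_sub, Prod.snd_sub, Prod.fst_add, Prod.snd_add,
    Prod.smul_fst, Prod.smul_snd, smul_eq_mul]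
  ring

lemma orient_frameMap (A B C a b c : K × K) :
    orient (frameMap A B C a) (frameMap A B C b) (frameMap A B C c) =
      orient A B C * orient a b c :=
  cross_frameMap A B C a b a c

@[simp] lemma frameMap_zero_zero (A B C : K × K) : frameMap A B C (0, 0) = A := by
  simp [frameMap]

@[simp] lemma frameMap_one_zero (A B C : K × K) : frameMap A B C (1, 0) = B := by
  simp [frameMap]

@[simp] lemma frameMap_zero_one (A B C : K × K) : frameMap A B C (0, 1) = C := by
  simp [frameMap]

lemma frameMap_surjective {A B C : K × K} (h : orient A B C ≠ 0) :
    Function.Surjective (frameMap A B C) := by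
  intro x
  refine ⟨(orient A x C / orient A B C, orient A B x / orient A B C), ?_⟩
  refine eq_of_cross_sub_eq_zero (u := B - A) (v := C - A) h ?_ ?_ <;>
  · simp only [frameMap, cross, Prod.fst_sub, Prod.snd_sub, Prod.fst_add, Prod.snd_add,
      Prod.smul_fst, Prod.smul_snd, smul_eq_mul]
    field_simp
    simp only [orient, cross, Prod.fst_sub, Prod.snd_sub]
    ring

lemma IntersectionClosed.preimage_frameMap {R : Set (K × K)} (hR : IntersectionClosed R)
    {A B C : K × K} (h : orient A B C ≠ 0) : IntersectionClosed (frameMap A B C ⁻¹' R) := by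
  intro a ha b hb c hc d hd x hx hx₁ hx₂
  refine hR _ ha _ hb _ hc _ hd _ ?_ ?_ ?_
  · rw [cross_frameMap]; exact mul_ne_zero h hx
  · rw [orient_frameMap, hx₁, mul_zero]
  · rw [orient_frameMap, hx₂, mul_zero]

lemma IntersectionClosed.image_frameMap {R : Set (K × K)} (hR : IntersectionClosed R)
    {A B C : K × K} (h : orient A B C ≠ 0) : IntersectionClosed (frameMap A B C '' R) := by
  rintro _ ⟨a, ha, rfl⟩ _ ⟨b, hb, rfl⟩ _ ⟨c, hc, rfl⟩ _ ⟨d, hd, rfl⟩ x hx hx₁ hx₂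
  obtain ⟨x, rfl⟩ := frameMap_surjective h x
  rw [cross_frameMap] at hx
  rw [orient_frameMap, mul_eq_zero_iff_left h] at hx₁ hx₂
  exact mem_image_of_mem _ (hR a ha b hb c hc d hd x (right_ne_zero_of_mul hx) hx₁ hx₂)

lemma intersectionClosed_of_collinear_diff_singleton {S : Set (K × K)} {p : K × K}
    (h : Collinear K (S \ {p})) : IntersectionClosed S := by
  rw [collinear_iff_forall_orient_eq_zero] at h
  have exists_ne {a b : K × K} (ha : a ∈ S) (hb : b ∈ S) (hab : a ≠ b) :
      ∃ q ∈ S \ {p}, orient a b q = 0 := by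
    by_cases hap : a = p
    · exact ⟨b, ⟨hb, fun hbp => hab (hap.trans hbp.symm)⟩, orient_self_right a b⟩
    · exact ⟨a, ⟨ha, hap⟩, orient_self_outer a b⟩
  have through {a b : K × K} (ha : a ∈ S) (hb : b ∈ S) (hab : a = p ∨ b = p) :
      p ∈ S ∧ orient a b p = 0 := by
    rcases hab with rfl | rfl
    exacts [⟨ha, orient_self_outer a b⟩, ⟨hb, orient_self_right a b⟩]
  intro a ha b hb c hc d hd x hx hx₁ hx₂
  have hab : a ≠ b := by rintro rfl; simp [cross] at hx
  have hcd : c ≠ d := by rintro rfl; simp [cross] at hx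
  suffices ∃ y ∈ S, orient a b y = 0 ∧ orient c d y = 0 by
    obtain ⟨y, hy, hy₁, hy₂⟩ := this
    rwa [eq_of_orient_eq_zero hx hx₁ hx₂ hy₁ hy₂]
  by_cases habp : a = p ∨ b = p
  · by_cases hcdp : c = p ∨ d = p
    · exact ⟨p, (through ha hb habp).1, (through ha hb habp).2, (through hc hd hcdp).2⟩
    · obtain ⟨hcp, hdp⟩ := not_or.1 hcdp
      obtain ⟨q, hq, hq'⟩ := exists_ne ha hb hab
      exact ⟨q, hq.1, hq', h c ⟨hc, hcp⟩ d ⟨hd, hdp⟩ q hq⟩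
  · obtain ⟨hap, hbp⟩ := not_or.1 habp
    obtain ⟨q, hq, hq'⟩ := exists_ne hc hd hcd
    exact ⟨q, hq.1, h a ⟨ha, hap⟩ b ⟨hb, hbp⟩ q hq, hq'⟩

variable [CharZero K]

variable (K) in
/-- The vertices and the centre of the unit square. -/
def centeredUnitSquare : Set (K × K) := {(0, 0), (1, 0), (1, 1), (0, 1), (1 / 2, 1 / 2)}

/-- The vertices `A`, `B`, `B + D - A`, `D` of a parallelogram, together with its centre. -/
def centeredParallelogram (A B D : K × K) : Set (K × K) :=
  {A, B, B + D - A, D, midpoint K B D}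

lemma coords_of_orient_eq_zero_of_mem_centeredUnitSquare {a b x : K × K}
    (ha : a ∈ centeredUnitSquare K) (hb : b ∈ centeredUnitSquare K) (hab : a ≠ b)
    (hx : orient a b x = 0) :
    ((b - a).1 = 0 ∧ (x.1 = 0 ∨ x.1 = 1)) ∨ ((b - a).2 = 0 ∧ (x.2 = 0 ∨ x.2 = 1)) ∨
    ((b - a).1 = (b - a).2 ∧ x.1 = x.2) ∨ ((b - a).1 = -(b - a).2 ∧ x.1 = 1 - x.2) := by
  simp only [centeredUnitSquare, mem_insert_iff, mem_singleton_iff] at ha hb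
  rcases ha with rfl | rfl | rfl | rfl | rfl <;> rcases hb with rfl | rfl | rfl | rfl | rfl <;>
    simp [orient, cross] at hab hx ⊢ <;> grind

lemma intersectionClosed_centeredUnitSquare : IntersectionClosed (centeredUnitSquare K) := by
  rintro a ha b hb c hc d hd ⟨x, y⟩ hx hx₁ hx₂
  have hab : a ≠ b := by rintro rfl; simp [cross] at hx
  have hcd : c ≠ d := by rintro rfl; simp [cross] at hx
  have h₁ := coords_of_orient_eq_zero_of_mem_centeredUnitSquare ha hb hab hx₁
  have h₂ := coords_of_orient_eq_zero_of_mem_centeredUnitSquare hc hd hcd hx₂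
  simp only [cross] at hx
  simp only [centeredUnitSquare, mem_insert_iff, mem_singleton_iff, Prod.mk.injEq]
  grind

lemma image_frameMap_centeredUnitSquare (A B D : K × K) :
    frameMap A B D '' centeredUnitSquare K = centeredParallelogram A B D := by
  have hcenter : frameMap A B D (1 / 2, 1 / 2) = midpoint K B D := by
    rw [midpoint_eq_smul_add, invOf_eq_inv, frameMap]
    module
  have hopposite : frameMap A B D (1, 1) = B + D - A := by
    simp only [frameMap, one_smul]; abel
  simp only [centeredUnitSquare, centeredParallelogram, image_insert_eq, image_singleton, hcenter,
    hopposite, frameMap_zero_zero, frameMap_one_zero, frameMap_zero_one]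

lemma intersectionClosed_centeredParallelogram {A B D : K × K} (h : orient A B D ≠ 0) :
    IntersectionClosed (centeredParallelogram A B D) :=
  image_frameMap_centeredUnitSquare A B D ▸
    intersectionClosed_centeredUnitSquare.image_frameMap h

lemma centeredParallelogram_rotate (A B D : K × K) :
    centeredParallelogram B (B + D - A) A = centeredParallelogram A B D := by
  have hcenter : midpoint K (B + D - A) A = midpoint K B D := by
    rw [midpoint_eq_smul_add, midpoint_eq_smul_add, sub_add_cancel]
  have hvertex : B + D - A + A - B = D := by abel
  ext x
  simp only [centeredParallelogram, mem_insert_iff, mem_singleton_iff, hcenter, hvertex]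
  tauto

variable {S : Set (K × K)} {A B D : K × K}

lemma vertex_mem_of_forall_not_collinear (h : orient A B D ≠ 0)
    (hS : S ⊆ centeredParallelogram A B D) (hcol : ∀ p, ¬ Collinear K (S \ {p})) : A ∈ S := by
  by_contra hA
  have hBD : B ≠ D := by rintro rfl; simp at h
  refine hcol (B + D - A) (collinear_of_forall_orient_eq_zero hBD ?_)
  rintro x ⟨hx, hxC : x ≠ B + D - A⟩
  rcases hS hx with rfl | rfl | rfl | rfl | rfl
  exacts [absurd hx hA, orient_self_outer _ _, absurd rfl hxC, orient_self_right _ _,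
    orient_midpoint_right _ _]

lemma vertices_subset_of_forall_not_collinear (h : orient A B D ≠ 0)
    (hS : S ⊆ centeredParallelogram A B D) (hcol : ∀ p, ¬ Collinear K (S \ {p})) :
    {A, B, B + D - A, D} ⊆ S := by
  have rotate {A B D : K × K} (h : orient A B D ≠ 0) : orient B (B + D - A) A ≠ 0 := by
    rwa [orient_rotate, orient_add_sub]
  have hB := vertex_mem_of_forall_not_collinear (rotate h)
    (by rwa [centeredParallelogram_rotate]) hcol
  have hC := vertex_mem_of_forall_not_collinear (rotate (rotate h))
    (by rwa [centeredParallelogram_rotate, centeredParallelogram_rotate]) hcol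
  have hD := vertex_mem_of_forall_not_collinear (rotate (rotate (rotate h)))
    (by rwa [centeredParallelogram_rotate, centeredParallelogram_rotate,
      centeredParallelogram_rotate]) hcol
  rw [sub_add_cancel, add_sub_cancel_left] at hD
  have hA := vertex_mem_of_forall_not_collinear h hS hcol
  simp [insert_subset_iff, hA, hB, hC, hD]

end IntersectionClosed

section MaximalTriangle

variable {K : Type*} [Field K] [LinearOrder K] {R : Set (K × K)}

/-- A positively oriented triangle with vertices in `R`, of maximal area among all such
triangles. -/
structure IsMaxTriangle (R : Set (K × K)) (A B C : K × K) : Prop where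
  mem₁ : A ∈ R
  mem₂ : B ∈ R
  mem₃ : C ∈ R
  pos : 0 < orient A B C
  le : ∀ p ∈ R, ∀ q ∈ R, ∀ r ∈ R, orient p q r ≤ orient A B C

lemma IsMaxTriangle.rotate {A B C : K × K} (h : IsMaxTriangle R A B C) :
    IsMaxTriangle R B C A where
  mem₁ := h.mem₂
  mem₂ := h.mem₃
  mem₃ := h.mem₁
  pos := by rw [orient_rotate]; exact h.pos
  le := by simpa only [orient_rotate] using h.le

lemma IsMaxTriangle.opposite {A B C : K × K} (h : IsMaxTriangle R A B C) (hD : B + C - A ∈ R) :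
    IsMaxTriangle R C B (B + C - A) :=
  ⟨h.mem₃, h.mem₂, hD, by rw [orient_opposite_vertex]; exact h.pos,
    by rw [orient_opposite_vertex]; exact h.le⟩

variable [IsStrictOrderedRing K]

lemma exists_isMaxTriangle (hR : R.Finite) (h : ¬ Collinear K R) :
    ∃ A B C, IsMaxTriangle R A B C := by
  obtain ⟨a, ha, b, hb, c, hc, habc⟩ := not_collinear_iff_exists_orient_ne_zero.1 h
  obtain ⟨⟨A, B, C⟩, ⟨hA, hB, hC⟩, hmax⟩ := exists_max_image (R ×ˢ R ×ˢ R)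
    (fun t => orient t.1 t.2.1 t.2.2) (hR.prod (hR.prod hR)) ⟨(a, b, c), ha, hb, hc⟩
  have le : ∀ p ∈ R, ∀ q ∈ R, ∀ r ∈ R, orient p q r ≤ orient A B C :=
    fun p hp q hq r hr => hmax (p, q, r) ⟨hp, hq, hr⟩
  refine ⟨A, B, C, hA, hB, hC, ?_, le⟩
  rcases habc.lt_or_gt with hneg | hpos
  · have := le b hb a ha c hc
    rw [orient_swap] at this
    linarith
  · exact hpos.trans_le (le a ha b hb c hc)

lemma IntersectionClosed.eq_of_mem_axes (hR : IntersectionClosed R) (h₁ : (1, 0) ∈ R)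
    (h₂ : (0, 1) ∈ R) (hside : ∀ t : K, (t, 1 - t) ∈ R → 0 ≤ t ∧ t ≤ 1) {e f : K}
    (hf₀ : 0 < f) (hf₁ : f < 1) (he₀ : 0 < e) (he₁ : e < 1) (hf : (f, 0) ∈ R)
    (he : (0, e) ∈ R) : e = f := by
  by_contra hef
  -- The line joining the two points meets `x + y = 1` outside the segment.
  have hfe : f - e ≠ 0 := sub_ne_zero.2 (Ne.symm hef)
  obtain ⟨t, ht⟩ : ∃ t, t * (f - e) = f * (1 - e) := ⟨_, div_mul_cancel₀ _ hfe⟩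
  have hmem : (t, 1 - t) ∈ R := by
    refine hR _ h₁ _ h₂ _ hf _ he _ ?_ ?_ ?_ <;> simp only [orient, cross, Prod.fst_sub,
      Prod.snd_sub]
    · contrapose! hfe; linear_combination hfe
    · ring
    · linear_combination ht
  obtain ⟨ht₀, ht₁⟩ := hside t hmem
  rcases lt_or_gt_of_ne hef with hlt | hlt <;> nlinarith

lemma IntersectionClosed.notMem_axes (hR : IntersectionClosed R) (h₀ : (0, 0) ∈ R)
    (h₁ : (1, 0) ∈ R) (h₂ : (0, 1) ∈ R)
    (hside : ∀ t : K, (t, 1 - t) ∈ R → 0 ≤ t ∧ t ≤ 1) {e f : K}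
    (hf₀ : 0 < f) (hf₁ : f < 1) (he₀ : 0 < e) (he₁ : e < 1) (hf : (f, 0) ∈ R) :
    (0, e) ∉ R := by
  intro he
  obtain rfl := hR.eq_of_mem_axes h₁ h₂ hside hf₀ hf₁ he₀ he₁ hf he
  -- For `F = (e, 0)` and `E = (0, e)`, the lines from the vertices through `E` and `F` meet
  -- on the median, which meets `E F` in its midpoint `M`; the line from `(1, 0)` through `M`
  -- then gives a point `(0, e')` with `e' ≠ e`.
  have he' : 1 + e ≠ 0 := by positivity
  have he'' : 2 - e ≠ 0 := by linarith
  have hP : (e / (1 + e), e / (1 + e)) ∈ R := by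
    refine hR _ h₁ _ he _ h₂ _ hf _ ?_ ?_ ?_ <;> simp only [orient, cross, Prod.fst_sub,
      Prod.snd_sub]
    · nlinarith
    · field
    · field
  have hM : (e / 2, e / 2) ∈ R := by
    refine hR _ h₀ _ hP _ hf _ he _ ?_ ?_ ?_ <;> simp only [orient, cross, Prod.fst_sub,
      Prod.snd_sub]
    · have : 0 < e / (1 + e) := by positivity
      nlinarith
    · ring
    · ring
  have hE : (0, e / (2 - e)) ∈ R := by
    refine hR _ h₁ _ hM _ h₀ _ h₂ _ ?_ ?_ ?_ <;> simp only [orient, cross, Prod.fst_sub,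
      Prod.snd_sub]
    · linarith
    · field
    · ring
  have h2e : 0 < 2 - e := by linarith
  have := hR.eq_of_mem_axes h₁ h₂ hside hf₀ hf₁ (by positivity)
    ((div_lt_one h2e).2 (by linarith)) hf hE
  rw [div_eq_iff he''] at this
  nlinarith

namespace IsMaxTriangle

variable {A B C P : K × K}

lemma nonneg_of_orient_eq_zero (h : IsMaxTriangle R A B C) (hP : P ∈ R)
    (hABP : orient A B P = 0) : 0 ≤ orient B C P ∧ 0 ≤ orient C A P := by
  have hsum := orient_add_orient_add_orient A B C P
  have h₁ := h.le B h.mem₂ C h.mem₃ P hP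
  have h₂ := h.le C h.mem₃ A h.mem₁ P hP
  constructor <;> linarith

lemma orient_eq_of_orient_neg (hR : IntersectionClosed R) (h : IsMaxTriangle R A B C)
    (hP : P ∈ R) (hneg : orient A B P < 0) : orient B C P = orient A B C := by
  refine (h.le B h.mem₂ C h.mem₃ P hP).antisymm (not_lt.1 fun hlt => ?_)
  have hP_sum := orient_add_orient_add_orient A B C P
  have hcross : cross (P - A) (C - B) ≠ 0 := by
    rw [cross_sub_sub, orient_rotate C A P, orient_rotate B A P, orient_swap A B P]
    linarith
  -- A point of `R` on the line `B C` lies in the segment, hence on the same side of `A B` as `C`.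
  obtain ⟨Q, hQ, hAPQ, hBCQ⟩ := hR.exists_mem h.mem₁ hP h.mem₂ h.mem₃ hcross
  have hQ_nonneg := (h.rotate.nonneg_of_orient_eq_zero hQ hBCQ).2
  have hQ_sum := orient_add_orient_add_orient A B C Q
  have hpluecker := orient_mul_orient A B C P Q
  rw [hAPQ, orient_swap C A Q, orient_swap C A P] at hpluecker
  nlinarith [h.pos]

lemma eq_of_orient_neg (hR : IntersectionClosed R) (h : IsMaxTriangle R A B C) (hP : P ∈ R)
    (hneg : orient A B P < 0) : P = A + B - C := by
  have hBCP := orient_eq_of_orient_neg hR h hP hneg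
  -- The triangle `P B C` is maximal as well, and `A` lies outside it.
  have hPBC : IsMaxTriangle R C P B :=
    ⟨h.mem₃, hP, h.mem₂, by rw [orient_rotate, hBCP]; exact h.pos,
      by rw [orient_rotate, hBCP]; exact h.le⟩
  have hCPA : orient C P A < 0 := by
    rw [orient_swap P C A, orient_rotate A P C, orient_rotate C A P]
    linarith [orient_add_orient_add_orient A B C P]
  have hPBA := orient_eq_of_orient_neg hR hPBC h.mem₁ hCPA
  rw [orient_rotate A P B, orient_rotate B A P, orient_swap A B P, orient_rotate B C P,
    hBCP] at hPBA
  refine eq_of_cross_sub_eq_zero (u := B - A) (v := C - B) ?_ ?_ ?_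
  · have : cross (B - A) (C - B) = orient A B C := by
      rw [cross_sub_sub, orient_self_right, sub_zero]
    exact this ▸ h.pos.ne'
  · simp only [orient, cross, Prod.fst_sub, Prod.snd_sub, Prod.fst_add, Prod.snd_add] at *
    linear_combination -hPBA
  · simp only [orient, cross, Prod.fst_sub, Prod.snd_sub, Prod.fst_add, Prod.snd_add] at *
    linear_combination hBCP

lemma nonneg_and_le_one_of_add_smul_mem (h : IsMaxTriangle R A B C) {t : K}
    (ht : A + t • (B - A) ∈ R) : 0 ≤ t ∧ t ≤ 1 := by
  have hAB : orient A B (A + t • (B - A)) = 0 := by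
    simp only [orient, cross, add_sub_cancel_left, Prod.smul_fst, Prod.smul_snd, smul_eq_mul]
    ring
  have hCA : orient C A (A + t • (B - A)) = t * orient A B C := by
    simp only [orient, cross, Prod.fst_sub, Prod.snd_sub, Prod.fst_add, Prod.snd_add,
      Prod.smul_fst, Prod.smul_snd, smul_eq_mul]
    ring
  have hsum := orient_add_orient_add_orient A B C (A + t • (B - A))
  obtain ⟨h₁, h₂⟩ := h.nonneg_of_orient_eq_zero ht hAB
  constructor <;> nlinarith [h.pos]

lemma eq_or_eq_of_mem_adjacent_side (hR : IntersectionClosed R) (h : IsMaxTriangle R A B C)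
    {E F : K × K} (hF : F ∈ R) (hABF : orient A B F = 0) (hFA : F ≠ A) (hFB : F ≠ B)
    (hE : E ∈ R) (hCAE : orient C A E = 0) : E = C ∨ E = A := by
  have hAB : A ≠ B := by rintro rfl; simpa using h.pos
  have hCA : C ≠ A := by rintro rfl; simpa using h.pos
  obtain ⟨f, rfl⟩ := exists_eq_add_smul_of_orient_eq_zero hAB hABF
  obtain ⟨e, rfl⟩ := exists_eq_add_smul_of_orient_eq_zero hCA hCAE
  by_contra! hE'
  have hf₀ : f ≠ 0 := by rintro rfl; simp at hFA
  have hf₁ : f ≠ 1 := by rintro rfl; simp at hFB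
  have he₀ : e ≠ 0 := by rintro rfl; simp at hE'
  have he₁ : e ≠ 1 := by rintro rfl; simp at hE'
  obtain ⟨hf₀', hf₁'⟩ := h.nonneg_and_le_one_of_add_smul_mem hF
  obtain ⟨he₀', he₁'⟩ := h.rotate.rotate.nonneg_and_le_one_of_add_smul_mem hE
  have hside (t : K) (ht : frameMap A B C (t, 1 - t) ∈ R) : 0 ≤ t ∧ t ≤ 1 := by
    have ht' : frameMap A B C (t, 1 - t) = B + (1 - t) • (C - B) := by
      simp only [frameMap]; module
    obtain ⟨h₀, h₁⟩ := h.rotate.nonneg_and_le_one_of_add_smul_mem (ht' ▸ ht)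
    exact ⟨by linarith, by linarith⟩
  have hF' : frameMap A B C (f, 0) ∈ R := by simpa [frameMap] using hF
  have hE'' : frameMap A B C (0, 1 - e) ∈ R := by
    convert hE using 1; simp only [frameMap]; module
  exact (hR.preimage_frameMap h.pos.ne').notMem_axes (by simpa using h.mem₁)
    (by simpa using h.mem₂) (by simpa using h.mem₃) hside (hf₀'.lt_of_ne' hf₀)
    (hf₁'.lt_of_ne hf₁) (sub_pos.2 (he₁'.lt_of_ne he₁)) (sub_lt_self 1 (he₀'.lt_of_ne' he₀))
    hF' hE''

lemma orient_eq_zero_of_nonneg (hR : IntersectionClosed R) (h : IsMaxTriangle R A B C)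
    (hP : P ∈ R) (h₁ : 0 ≤ orient A B P) (h₂ : 0 ≤ orient B C P) (h₃ : 0 ≤ orient C A P) :
    orient A B P = 0 ∨ orient B C P = 0 ∨ orient C A P = 0 := by
  by_contra! ⟨hABP, hBCP, hCAP⟩
  obtain ⟨F, hF, hABF, hFA, hFB⟩ := hR.exists_mem_side h.mem₁ h.mem₂ h.mem₃ hP hBCP hCAP
    (by positivity)
  obtain ⟨E, hE, hCAE, hEC, hEA⟩ := hR.exists_mem_side h.mem₃ h.mem₁ h.mem₂ hP hABP hBCP
    (by positivity)
  exact (h.eq_or_eq_of_mem_adjacent_side hR hF hABF hFA hFB hE hCAE).elim hEC hEA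

lemma collinear_diff_singleton_of_orient_eq_zero (hR : IntersectionClosed R)
    (h : IsMaxTriangle R A B C)
    (hsides : ∀ P ∈ R, orient A B P = 0 ∨ orient B C P = 0 ∨ orient C A P = 0)
    {F : K × K} (hF : F ∈ R) (hABF : orient A B F = 0) (hFA : F ≠ A) (hFB : F ≠ B) :
    Collinear K (R \ {C}) := by
  refine collinear_of_forall_orient_eq_zero (a := A) (b := B) ?_ ?_
  · rintro rfl; simpa using h.pos
  · rintro P ⟨hP, hPC : P ≠ C⟩
    rcases hsides P hP with hABP | hBCP | hCAP
    · exact hABP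
    · by_contra! hABP
      have hPB : P ≠ B := by rintro rfl; simp at hABP
      rcases h.rotate.eq_or_eq_of_mem_adjacent_side hR hP hBCP hPB hPC hF hABF with rfl | rfl
      exacts [hFA rfl, hFB rfl]
    · rcases h.eq_or_eq_of_mem_adjacent_side hR hF hABF hFA hFB hP hCAP with rfl | rfl
      exacts [absurd rfl hPC, orient_self_outer _ _]

lemma exists_collinear_diff_singleton (hR : IntersectionClosed R) (h : IsMaxTriangle R A B C)
    (hsides : ∀ P ∈ R, orient A B P = 0 ∨ orient B C P = 0 ∨ orient C A P = 0) :
    ∃ p, Collinear K (R \ {p}) := by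
  by_cases hBC : ∃ F ∈ R, orient B C F = 0 ∧ F ≠ B ∧ F ≠ C
  · obtain ⟨F, hF, hBCF, hFB, hFC⟩ := hBC
    exact ⟨A, h.rotate.collinear_diff_singleton_of_orient_eq_zero hR
      (fun P hP => by have := hsides P hP; tauto) hF hBCF hFB hFC⟩
  by_cases hCA : ∃ F ∈ R, orient C A F = 0 ∧ F ≠ C ∧ F ≠ A
  · obtain ⟨F, hF, hCAF, hFC, hFA⟩ := hCA
    exact ⟨B, h.rotate.rotate.collinear_diff_singleton_of_orient_eq_zero hR
      (fun P hP => by have := hsides P hP; tauto) hF hCAF hFC hFA⟩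
  push Not at hBC hCA
  refine ⟨C, collinear_of_forall_orient_eq_zero (a := A) (b := B) ?_ ?_⟩
  · rintro rfl; simpa using h.pos
  · rintro P ⟨hP, hPC : P ≠ C⟩
    rcases hsides P hP with hABP | hBCP | hCAP
    · exact hABP
    · rw [not_ne_iff.1 fun hPB => hPC (hBC P hP hBCP hPB), orient_self_right]
    · rw [hCA P hP hCAP hPC, orient_self_outer]

lemma eq_or_eq_of_orient_ne_zero (hR : IntersectionClosed R) (h : IsMaxTriangle R A B C)
    (hD : B + C - A ∈ R) (hP : P ∈ R) (hBCP : orient B C P ≠ 0) :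
    P = A ∨ P = B + C - A := by
  rcases hBCP.lt_or_gt with hneg | hpos
  · exact Or.inr (h.rotate.eq_of_orient_neg hR hP hneg)
  · left
    have hCBP : orient C B P < 0 := by rw [orient_swap]; exact neg_neg_of_pos hpos
    rw [(h.opposite hD).eq_of_orient_neg hR hP hCBP]
    abel

lemma eq_of_mem_diagonal (hR : IntersectionClosed R) (h : IsMaxTriangle R A B C)
    (hD : B + C - A ∈ R) (hP : P ∈ R) (hBCP : orient B C P = 0) (hPC : P ≠ C) :
    P = B ∨ P = midpoint K B C := by
  have hne : orient A B C ≠ 0 := h.pos.ne'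
  have hBCD : orient B C (B + C - A) ≠ 0 := by
    rwa [orient_swap, orient_opposite_vertex, neg_ne_zero]
  have hcross : cross (P - A) (B + C - A - B) ≠ 0 := fun hAPC => hPC <| by
    rw [add_sub_assoc, add_sub_cancel_left] at hAPC
    refine eq_vertex_of_orient_eq_zero (b := A) (c := B) ?_ ?_ ?_
    · rwa [orient_rotate, orient_rotate]
    · rwa [← orient_rotate]
    · rw [orient_swap, hBCP, neg_zero]
  -- The line `A P` meets the line through `B` parallel to `A C` in a point of `R`.
  obtain ⟨Q, hQ, hAPQ, hBDQ⟩ := hR.exists_mem h.mem₁ hP h.mem₂ hD hcross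
  by_cases hBCQ : orient B C Q = 0
  · left
    obtain rfl : Q = B := eq_vertex_of_orient_eq_zero hBCD hBCQ hBDQ
    refine eq_vertex_of_orient_eq_zero (b := C) (c := A) ?_ hBCP ?_
    · rwa [orient_rotate]
    · rwa [← orient_rotate]
  · right
    rcases h.eq_or_eq_of_orient_ne_zero hR hD hQ hBCQ with rfl | rfl
    · refine absurd hBDQ ?_
      rwa [orient_rotate Q B, orient_add_sub]
    · rw [orient_swap_right, neg_eq_zero] at hAPQ
      exact eq_of_orient_eq_zero (by rw [cross_diagonals]; exact mul_ne_zero two_ne_zero hne)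
        hAPQ hBCP (orient_opposite_vertex_midpoint A B C) (orient_midpoint_right B C)

lemma subset_centeredParallelogram (hR : IntersectionClosed R) (h : IsMaxTriangle R A B C)
    (hD : B + C - A ∈ R) : R ⊆ centeredParallelogram A B C := by
  intro P hP
  simp only [centeredParallelogram, mem_insert_iff, mem_singleton_iff]
  by_cases hBCP : orient B C P = 0
  · by_cases hPC : P = C
    · simp [hPC]
    · rcases h.eq_of_mem_diagonal hR hD hP hBCP hPC with rfl | rfl <;> simp
  · rcases h.eq_or_eq_of_orient_ne_zero hR hD hP hBCP with rfl | rfl <;> simp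

end IsMaxTriangle

theorem exists_collinear_or_subset_centeredParallelogram (hfin : R.Finite)
    (hR : IntersectionClosed R) (h : ¬ Collinear K R) :
    (∃ p, Collinear K (R \ {p})) ∨
      ∃ A B D, orient A B D ≠ 0 ∧ R ⊆ centeredParallelogram A B D := by
  obtain ⟨A, B, C, hABC⟩ := exists_isMaxTriangle hfin h
  have of_orient_neg {A B C P : K × K} (hABC : IsMaxTriangle R A B C) (hP : P ∈ R)
      (hneg : orient B C P < 0) :
      ∃ A B D, orient A B D ≠ 0 ∧ R ⊆ centeredParallelogram A B D := by
    obtain rfl := hABC.rotate.eq_of_orient_neg hR hP hneg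
    exact ⟨A, B, C, hABC.pos.ne', hABC.subset_centeredParallelogram hR hP⟩
  by_cases hin : ∀ P ∈ R, 0 ≤ orient A B P ∧ 0 ≤ orient B C P ∧ 0 ≤ orient C A P
  · exact Or.inl <| hABC.exists_collinear_diff_singleton hR fun P hP =>
      hABC.orient_eq_zero_of_nonneg hR hP (hin P hP).1 (hin P hP).2.1 (hin P hP).2.2
  · right
    push Not at hin
    obtain ⟨P, hP, hout⟩ := hin
    by_cases hABP : 0 ≤ orient A B P
    · by_cases hBCP : 0 ≤ orient B C P
      · exact of_orient_neg hABC.rotate hP (hout hABP hBCP)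
      · exact of_orient_neg hABC hP (not_le.1 hBCP)
    · exact of_orient_neg hABC.rotate.rotate hP (not_le.1 hABP)

end MaximalTriangle

section Iteration

variable {S : Set (ℝ × ℝ)}

lemma mem_line_iff_orient {a b x : ℝ × ℝ} (hab : a ≠ b) : x ∈ line a b ↔ orient a b x = 0 := by
  rw [line, mem_affineSpan_pair_iff_exists_lineMap_eq]
  constructor
  · rintro ⟨t, rfl⟩
    simp only [AffineMap.lineMap_apply, vsub_eq_sub, vadd_eq_add, orient, cross,
      add_sub_cancel_right, Prod.smul_fst, Prod.smul_snd, smul_eq_mul]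
    ring
  · intro h
    obtain ⟨t, rfl⟩ := exists_eq_add_smul_of_orient_eq_zero hab h
    exact ⟨t, by rw [AffineMap.lineMap_apply, vsub_eq_sub, vadd_eq_add, add_comm]⟩

lemma line_eq_line_of_cross_eq_zero {a b c d x : ℝ × ℝ} (hab : a ≠ b) (hcd : c ≠ d)
    (h : cross (b - a) (d - c) = 0) (hx₁ : orient a b x = 0) (hx₂ : orient c d x = 0) :
    line a b = line c d := by
  obtain ⟨t, ht⟩ := exists_eq_smul_of_cross_eq_zero (sub_ne_zero.2 hab.symm) h
  have ht₀ : t ≠ 0 := by rintro rfl; exact hcd (sub_eq_zero.1 (by simpa using ht)).symm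
  ext y
  have hy : orient c d y = t * orient a b y := by
    have h₁ := cross_sub_sub a b x y
    have h₂ := cross_sub_sub c d x y
    rw [hx₁, sub_zero] at h₁
    rw [hx₂, sub_zero, ht] at h₂
    rw [← h₁, ← h₂]
    simp only [cross, Prod.smul_fst, Prod.smul_snd, smul_eq_mul]
    ring
  rw [mem_line_iff_orient hab, mem_line_iff_orient hcd, hy, mul_eq_zero_iff_left ht₀]

lemma mem_interT_iff {x : ℝ × ℝ} : x ∈ interT S ↔ ∃ a ∈ S, ∃ b ∈ S, ∃ c ∈ S, ∃ d ∈ S,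
    cross (b - a) (d - c) ≠ 0 ∧ orient a b x = 0 ∧ orient c d x = 0 := by
  constructor
  · rintro ⟨a, ha, b, hb, c, hc, d, hd, hab, hcd, hne, hx₁, hx₂⟩
    rw [mem_line_iff_orient hab] at hx₁
    rw [mem_line_iff_orient hcd] at hx₂
    exact ⟨a, ha, b, hb, c, hc, d, hd,
      fun h => hne (line_eq_line_of_cross_eq_zero hab hcd h hx₁ hx₂), hx₁, hx₂⟩
  · rintro ⟨a, ha, b, hb, c, hc, d, hd, h, hx₁, hx₂⟩
    have hab : a ≠ b := by rintro rfl; simp [cross] at h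
    have hcd : c ≠ d := by rintro rfl; simp [cross] at h
    refine ⟨a, ha, b, hb, c, hc, d, hd, hab, hcd, fun heq => h ?_,
      (mem_line_iff_orient hab).2 hx₁, (mem_line_iff_orient hcd).2 hx₂⟩
    have hc' : c ∈ line a b := heq ▸ left_mem_affineSpan_pair ℝ c d
    have hd' : d ∈ line a b := heq ▸ right_mem_affineSpan_pair ℝ c d
    rw [mem_line_iff_orient hab] at hc' hd'
    rw [cross_sub_sub, hc', hd', sub_zero]

lemma intersectionClosed_iff_interT_subset : IntersectionClosed S ↔ interT S ⊆ S := by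
  constructor
  · intro h x hx
    obtain ⟨a, ha, b, hb, c, hc, d, hd, hne, hx₁, hx₂⟩ := mem_interT_iff.1 hx
    exact h a ha b hb c hc d hd x hne hx₁ hx₂
  · exact fun h a ha b hb c hc d hd x hne hx₁ hx₂ =>
      h (mem_interT_iff.2 ⟨a, ha, b, hb, c, hc, d, hd, hne, hx₁, hx₂⟩)

lemma interT_mono {S' : Set (ℝ × ℝ)} (h : S ⊆ S') : interT S ⊆ interT S' := by
  rintro x ⟨a, ha, b, hb, c, hc, d, hd, hx⟩
  exact ⟨a, h ha, b, h hb, c, h hc, d, h hd, hx⟩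

lemma finite_interT (hS : S.Finite) : (interT S).Finite := by
  let meet : (ℝ × ℝ) × (ℝ × ℝ) × (ℝ × ℝ) × (ℝ × ℝ) → Set (ℝ × ℝ) := fun t =>
    {x | cross (t.2.1 - t.1) (t.2.2.2 - t.2.2.1) ≠ 0 ∧ orient t.1 t.2.1 x = 0 ∧
      orient t.2.2.1 t.2.2.2 x = 0}
  have hmeet (t) : (meet t).Finite := Set.Subsingleton.finite fun x hx y hy =>
    eq_of_orient_eq_zero hx.1 hx.2.1 hx.2.2 hy.2.1 hy.2.2
  refine ((hS.prod (hS.prod (hS.prod hS))).biUnion fun t _ => hmeet t).subset fun x hx => ?_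
  obtain ⟨a, ha, b, hb, c, hc, d, hd, h⟩ := mem_interT_iff.1 hx
  exact mem_biUnion (x := (a, b, c, d)) ⟨ha, hb, hc, hd⟩ h

lemma subset_interT (h : ¬ Collinear ℝ S) : S ⊆ interT S := by
  intro p hp
  obtain ⟨q, hq, r, hr, hpqr⟩ : ∃ q ∈ S, ∃ r ∈ S, orient p q r ≠ 0 := by
    by_contra! hall
    obtain ⟨a, ha, b, hb, c, hc, habc⟩ := not_collinear_iff_exists_orient_ne_zero.1 h
    have hzero {q r : ℝ × ℝ} (hq : q ∈ S) (hr : r ∈ S) : orient q r p = 0 := by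
      rw [orient_rotate]; exact hall q hq r hr
    rw [← orient_add_orient_add_orient a b c p, hzero ha hb, hzero hb hc, hzero hc ha] at habc
    simp at habc
  exact mem_interT_iff.2 ⟨p, hp, q, hq, p, hp, r, hr, hpqr, orient_self_outer p q,
    orient_self_outer p r⟩

lemma interT_eq_empty (h : Collinear ℝ S) : interT S = ∅ := by
  refine eq_empty_of_forall_notMem fun x hx => ?_
  obtain ⟨a, ha, b, hb, c, hc, d, hd, hne, -⟩ := mem_interT_iff.1 hx
  rw [collinear_iff_forall_orient_eq_zero] at h
  exact hne (by rw [cross_sub_sub, h a ha b hb d hd, h a ha b hb c hc, sub_zero])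

lemma finite_iterate_interT (hS : S.Finite) (n : ℕ) : (interT^[n] S).Finite := by
  induction n with
  | zero => exact hS
  | succ n ih =>
    rw [Function.iterate_succ_apply']
    exact finite_interT ih

lemma subset_iterate_interT (h : ¬ Collinear ℝ S) (n : ℕ) : S ⊆ interT^[n] S := by
  induction n with
  | zero => exact Subset.rfl
  | succ n ih =>
    rw [Function.iterate_succ_apply']
    exact (subset_interT h).trans (interT_mono ih)

lemma exists_iterate_interT_eq_of_collinear (h : Collinear ℝ S) :
    ∃ n, interT^[n + 1] S = interT^[n] S := by
  refine ⟨1, ?_⟩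
  rw [Function.iterate_succ_apply', Function.iterate_one, interT_eq_empty h,
    interT_eq_empty (collinear_empty ℝ _)]

lemma exists_iterate_interT_eq (h : IntersectionClosed S) :
    ∃ n, interT^[n + 1] S = interT^[n] S := by
  by_cases hcol : Collinear ℝ S
  · exact exists_iterate_interT_eq_of_collinear hcol
  · exact ⟨0, (intersectionClosed_iff_interT_subset.1 h).antisymm (subset_interT hcol)⟩

end Iteration

section Exceptional

variable {A B C D : ℝ × ℝ}

lemma isParallelogram_iff : IsParallelogram A B C D ↔ C = B + D - A ∧ orient A B D ≠ 0 := by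
  rw [IsParallelogram, collinear_triple_iff_orient_eq_zero]
  constructor
  · rintro ⟨hC, -, h⟩
    exact ⟨by rw [add_sub_right_comm, hC, sub_add_cancel], h⟩
  · rintro ⟨rfl, h⟩
    refine ⟨by abel, fun hBA => h ?_, h⟩
    rw [sub_eq_zero.1 hBA, orient_self_left]

lemma insert_midpoint_eq_centeredParallelogram :
    ({A, B, B + D - A, D, midpoint ℝ A (B + D - A)} : Set (ℝ × ℝ)) =
      centeredParallelogram A B D := by
  rw [centeredParallelogram, midpoint_eq_smul_add, midpoint_eq_smul_add, add_sub_cancel]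

lemma interT_vertices (h : orient A B D ≠ 0) :
    interT {A, B, B + D - A, D} = centeredParallelogram A B D := by
  have hsub : ({A, B, B + D - A, D} : Set (ℝ × ℝ)) ⊆ centeredParallelogram A B D := by
    simp [centeredParallelogram, insert_subset_iff]
  have hcol : ¬ Collinear ℝ {A, B, B + D - A, D} :=
    not_collinear_iff_exists_orient_ne_zero.2
      ⟨A, by simp, B, by simp, D, by simp, h⟩
  refine ((interT_mono hsub).trans <| intersectionClosed_iff_interT_subset.1 <|
    intersectionClosed_centeredParallelogram h).antisymm ?_
  have hcenter : midpoint ℝ B D ∈ interT {A, B, B + D - A, D} :=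
    mem_interT_iff.2 ⟨A, by simp, B + D - A, by simp, B, by simp, D, by simp,
      by rw [cross_diagonals]; exact mul_ne_zero two_ne_zero h,
      orient_opposite_vertex_midpoint A B D, orient_midpoint_right B D⟩
  have hvertices := subset_interT hcol
  simp only [insert_subset_iff, singleton_subset_iff] at hvertices
  simp [centeredParallelogram, insert_subset_iff, hvertices, hcenter]

lemma exists_subset_centeredParallelogram {S : Set (ℝ × ℝ)} (hS : S.Finite)
    (h : ¬ Collinear ℝ S) (hcol : ∀ p, ¬ Collinear ℝ (S \ {p})) {n : ℕ}
    (hn : interT^[n + 1] S = interT^[n] S) :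
    ∃ A B D, orient A B D ≠ 0 ∧ S ⊆ centeredParallelogram A B D := by
  have hsub := subset_iterate_interT h n
  rw [Function.iterate_succ_apply'] at hn
  rcases exists_collinear_or_subset_centeredParallelogram (finite_iterate_interT hS n)
    (intersectionClosed_iff_interT_subset.2 hn.le) (fun hcol' => h (hcol'.subset hsub)) with
    ⟨p, hp⟩ | ⟨A, B, D, hne, hABD⟩
  · exact absurd (hp.subset (sdiff_subset_sdiff_left hsub)) (hcol p)
  · exact ⟨A, B, D, hne, hsub.trans hABD⟩

lemma exists_parallelogram_of_subset {S : Set (ℝ × ℝ)} (h : orient A B D ≠ 0)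
    (hS : S ⊆ centeredParallelogram A B D) (hcol : ∀ p, ¬ Collinear ℝ (S \ {p})) :
    (∃ A B C D : ℝ × ℝ, IsParallelogram A B C D ∧ S = {A, B, C, D}) ∨
      ∃ A B C D : ℝ × ℝ, IsParallelogram A B C D ∧ S = {A, B, C, D, midpoint ℝ A C} := by
  have hpar : IsParallelogram A B (B + D - A) D := isParallelogram_iff.2 ⟨rfl, h⟩
  have hvertices := vertices_subset_of_forall_not_collinear h hS hcol
  by_cases hcenter : midpoint ℝ B D ∈ S
  · refine Or.inr ⟨A, B, B + D - A, D, hpar, ?_⟩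
    rw [insert_midpoint_eq_centeredParallelogram]
    simp only [insert_subset_iff, singleton_subset_iff] at hvertices
    exact hS.antisymm (by simp [centeredParallelogram, insert_subset_iff, hvertices, hcenter])
  · refine Or.inl ⟨A, B, B + D - A, D, hpar, Subset.antisymm (fun x hx => ?_) hvertices⟩
    have hx' : x ≠ midpoint ℝ B D := by rintro rfl; exact hcenter hx
    simpa [centeredParallelogram, hx'] using hS hx

end Exceptional

/-- A finite set `S ⊆ ℝ²` has finite order under `T` (the iterates eventually stabilize)
iff `S` is empty, collinear, a collinear set plus a point off its line, the vertices of
a nondegenerate parallelogram, or such vertices plus the intersection of the diagonals. -/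
theorem finite_order_iff_exceptional (S : Set (ℝ × ℝ)) (hS : S.Finite) :
    (∃ n : ℕ, interT^[n + 1] S = interT^[n] S) ↔
      (S = ∅ ∨
       Collinear ℝ S ∨
       (∃ p ∈ S, Collinear ℝ (S \ {p}) ∧ p ∉ affineSpan ℝ (S \ {p})) ∨
       (∃ A B C D : ℝ × ℝ, IsParallelogram A B C D ∧ S = {A, B, C, D}) ∨
       (∃ A B C D : ℝ × ℝ, IsParallelogram A B C D ∧
          S = {A, B, C, D, midpoint ℝ A C})) := by
  constructor
  · rintro ⟨n, hn⟩
    by_cases hcol : Collinear ℝ S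
    · exact Or.inr (Or.inl hcol)
    by_cases hpencil : ∃ p, Collinear ℝ (S \ {p})
    · obtain ⟨p, hp⟩ := hpencil
      obtain ⟨hpS, hpspan⟩ := mem_and_notMem_affineSpan_of_not_collinear hcol hp
      exact Or.inr (Or.inr (Or.inl ⟨p, hpS, hp, hpspan⟩))
    push Not at hpencil
    obtain ⟨A, B, D, h, hABD⟩ := exists_subset_centeredParallelogram hS hcol hpencil hn
    exact Or.inr (Or.inr (Or.inr (exists_parallelogram_of_subset h hABD hpencil)))
  · rintro (rfl | h | ⟨p, -, h, -⟩ | ⟨A, B, C, D, h, rfl⟩ | ⟨A, B, C, D, h, rfl⟩)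
    · exact exists_iterate_interT_eq_of_collinear (collinear_empty ℝ _)
    · exact exists_iterate_interT_eq_of_collinear h
    · exact exists_iterate_interT_eq (intersectionClosed_of_collinear_diff_singleton h)
    · obtain ⟨rfl, hne⟩ := isParallelogram_iff.1 h
      obtain ⟨n, hn⟩ := exists_iterate_interT_eq (intersectionClosed_centeredParallelogram hne)
      exact ⟨n + 1, by rwa [← interT_vertices hne] at hn⟩
    · obtain ⟨rfl, hne⟩ := isParallelogram_iff.1 h
      rw [insert_midpoint_eq_centeredParallelogram]
      exact exists_iterate_interT_eq (intersectionClosed_centeredParallelogram hne)
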